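/- Let F₉ be the field with nine elements and let γ ∈ F₉ satisfy γ² = γ + 1. There exist elements u, v, ω of the rational function field F₉(s,t) in two variables over F₉ such that u and v are algebraically independent over F₉ and γ·ω² = u⁴ + v⁴ + 1. -/

import Mathlib

/-!
The plane curve `t ↦ (x(t) : y(t) : t⁴)` lifts to a rational curve on `X₃`. In characteristic `3`
the quartic `x⁴ + y⁴ + z⁴`, restricted to the line `(x + sl, y + l, z)` through a point of that
curve, has no `l²` term. A parabola `w + αl + βl²` that meets the double cover of this line to order
three over `l = 0` meets it in one further point, and the value `l = N / D` there is rational in `s`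
and `t`. As the slope `s` and the parameter `t` vary, these residual points fill the surface: on a
component of the pole divisor `D = 0` on which `N` is nonzero and `s` is nonconstant, the point
`((x + sl) / t⁴, (y + l) / t⁴)` goes to infinity in the direction `(s, 1)`, so a polynomial relation
over the constants would have a leading form vanishing at infinitely many directions. Since
`D(s, 1) = -γ¹²`, no component of `D = 0` is a line `s = const`, so it is enough to exhibit one
point of `D = 0` where `N ≠ 0`: over `F₈₁` one finds `s = z - z²`, `t = 1 + z³` with `z² = γ`.
-/

open MvPolynomial

section PolesAtInfinity

variable {σ k : Type*}

lemma aeval_const_mul_of_isHomogeneous {A : Type*} [CommSemiring k] [CommSemiring A] [Algebra k A]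
    {F : MvPolynomial σ k} {d : ℕ} (hF : F.IsHomogeneous d) (r : A) (a : σ → A) :
    aeval (fun i ↦ r * a i) F = r ^ d * aeval a F := by
  simp only [aeval_def, eval₂_eq, Finset.mul_sum]
  refine Finset.sum_congr rfl fun m hm ↦ ?_
  have hdeg : ∑ i ∈ m.support, m i = d := by
    by_contra h
    exact mem_support_iff.mp hm (hF.coeff_eq_zero h)
  simp only [mul_pow, Finset.prod_mul_distrib, Finset.prod_pow_eq_pow_sum, hdeg]
  ring

lemma homogeneousComponent_totalDegree_ne_zero [CommSemiring k] {F : MvPolynomial σ k}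
    (hF : F ≠ 0) : homogeneousComponent F.totalDegree F ≠ 0 := by
  obtain ⟨m, hm, hdeg : F.totalDegree = m.degree⟩ :=
    Finset.exists_mem_eq_sup F.support (support_nonempty.mpr hF) fun m ↦ m.sum fun _ e ↦ e
  refine ne_of_apply_ne (coeff m) ?_
  rw [coeff_homogeneousComponent, if_pos hdeg.symm, coeff_zero]
  exact mem_support_iff.mp hm

lemma pow_totalDegree_mul_aeval_div {K : Type*} [CommSemiring k] [Field K] [Algebra k K]
    (F : MvPolynomial σ k) (a : σ → K) {e : K} (he : e ≠ 0) :
    e ^ F.totalDegree * aeval (fun i ↦ a i / e) F =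
      ∑ i ∈ Finset.range (F.totalDegree + 1),
        e ^ (F.totalDegree - i) * aeval a (homogeneousComponent i F) := by
  have hscale (i : ℕ) : e ^ i * aeval (fun j ↦ a j / e) (homogeneousComponent i F) =
      aeval a (homogeneousComponent i F) := by
    simp only [← aeval_const_mul_of_isHomogeneous (homogeneousComponent_isHomogeneous i F),
      mul_div_cancel₀ _ he]
  conv_lhs => enter [2, 2]; rw [← sum_homogeneousComponent F]
  rw [map_sum, Finset.mul_sum]
  refine Finset.sum_congr rfl fun i hi ↦ ?_
  rw [← hscale, ← mul_assoc, pow_sub_mul_pow _ (Finset.mem_range_succ_iff.mp hi)]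

lemma algebraicIndependent_div_of_forall_isHomogeneous {R K S : Type*} [CommRing k] [CommRing R]
    [Algebra k R] [Field K] [Algebra R K] [FaithfulSMul R K] [Algebra k K] [IsScalarTower k R K]
    [CommRing S] [Algebra k S] (φ : R →ₐ[k] S) {a : σ → R} {e : R} (he : e ≠ 0) (hφe : φ e = 0)
    (ha : ∀ (F : MvPolynomial σ k) (d : ℕ), F.IsHomogeneous d →
      aeval (fun i ↦ φ (a i)) F = 0 → F = 0) :
    AlgebraicIndependent k fun i ↦ algebraMap R K (a i) / algebraMap R K e := by
  rw [algebraicIndependent_iff]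
  intro F hF
  by_contra hF0
  set d := F.totalDegree
  have he' : algebraMap R K e ≠ 0 := by
    simpa using (FaithfulSMul.algebraMap_injective R K).ne he
  have hcleared : ∑ i ∈ Finset.range (d + 1),
      e ^ (d - i) * aeval a (homogeneousComponent i F) = 0 := by
    apply FaithfulSMul.algebraMap_injective R K
    have h := pow_totalDegree_mul_aeval_div F (fun i ↦ algebraMap R K (a i)) he'
    rw [hF, mul_zero] at h
    simp only [map_sum, map_mul, map_pow, map_zero, h, ← aeval_algebraMap_apply,
      Function.comp_def, d]
  have hleading : aeval (fun i ↦ φ (a i)) (homogeneousComponent d F) = 0 := by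
    have hlower : ∀ i ∈ Finset.range d,
        φ (e ^ (d - i) * aeval a (homogeneousComponent i F)) = 0 := fun i hi ↦ by
      rw [map_mul, map_pow, hφe, zero_pow (Nat.sub_ne_zero_of_lt (Finset.mem_range.mp hi)),
        zero_mul]
    rw [← map_zero φ, ← hcleared, map_sum, Finset.sum_range_succ, Finset.sum_eq_zero hlower,
      Nat.sub_self, pow_zero, one_mul, zero_add, comp_aeval_apply]
  exact homogeneousComponent_totalDegree_ne_zero hF0
    (ha _ d (homogeneousComponent_isHomogeneous d F) hleading)

lemma eq_zero_of_isHomogeneous_of_transcendental {S : Type*} [CommRing k] [CommRing S] [IsDomain S]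
    [Algebra k S] {F : MvPolynomial (Fin 2) k} {d : ℕ} (hF : F.IsHomogeneous d) {r s : S}
    (hr : r ≠ 0) (hs : Transcendental k s) (h : aeval ![r * s, r] F = 0) : F = 0 := by
  have hdehom : aeval ![s, 1] F = 0 := by
    have hscale := aeval_const_mul_of_isHomogeneous hF r ![s, 1]
    rw [show (fun i ↦ r * ![s, 1] i) = ![r * s, r] by ext i; fin_cases i <;> simp, h] at hscale
    exact (mul_eq_zero.mp hscale.symm).resolve_left (pow_ne_zero d hr)
  have hpoly : aeval ![(Polynomial.X : Polynomial k), 1] F = 0 := by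
    refine transcendental_iff.mp hs _ ?_
    rw [← hdehom, comp_aeval_apply]
    congr 2
    ext i
    fin_cases i <;> simp
  simpa using (Polynomial.homogenize_eq_of_isHomogeneous hF hpoly).symm

lemma vars_subset_singleton_of_dvd_aeval_X [CommRing k] [IsDomain k] {p : MvPolynomial σ k} {i : σ}
    {c : Polynomial k} (hc : c ≠ 0) (h : p ∣ Polynomial.aeval (X i) c) : p.vars ⊆ {i} := by
  obtain ⟨q, hq⟩ := h
  have hne : p * q ≠ 0 := by
    rw [← hq]
    exact fun h ↦ hc (transcendental_iff.mp (transcendental_X k i) c h)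
  have hvars : (p * q).vars ⊆ {i} := by
    rw [← hq, ← Finset.coe_subset, Finset.coe_singleton, ← mem_supported]
    simp [supported]
  intro j hj
  refine hvars (mem_vars_iff_degreeOf_ne_zero.mpr ?_)
  rw [degreeOf_mul_eq (left_ne_zero_of_mul hne) (right_ne_zero_of_mul hne)]
  have := mem_vars_iff_degreeOf_ne_zero.mp hj
  omega

lemma transcendental_mk_X {Ω : Type*} [CommRing k] [IsDomain k] [CommSemiring Ω] [Algebra k Ω]
    {p : MvPolynomial σ k} {i : σ} {P Q : σ → Ω} (hPQ : P i = Q i) (hP : aeval P p = 0)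
    (hQ : aeval Q p ≠ 0) : Transcendental k (Ideal.Quotient.mk (Ideal.span {p}) (X i)) := by
  rw [transcendental_iff]
  intro c hc
  by_contra hc0
  have hdvd : p ∣ Polynomial.aeval (X i) c := by
    rwa [← Ideal.Quotient.mkₐ_eq_mk k, Polynomial.aeval_algHom_apply, Ideal.Quotient.mkₐ_eq_mk,
      Ideal.Quotient.eq_zero_iff_dvd] at hc
  have hvars := vars_subset_singleton_of_dvd_aeval_X hc0 hdvd
  refine hQ (hP ▸ eval₂Hom_congr' rfl (fun j hj _ ↦ ?_) rfl)
  rw [Finset.mem_singleton.mp (hvars hj), hPQ]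

lemma exists_prime_dvd_of_aeval_eq_zero {Ω : Type*} [Field k] [CommRing Ω] [IsDomain Ω]
    [Algebra k Ω] {D : MvPolynomial σ k} (hD : D ≠ 0) {P : σ → Ω} (hP : aeval P D = 0) :
    ∃ p, Prime p ∧ p ∣ D ∧ aeval P p = 0 := by
  obtain ⟨f, hprime, hassoc⟩ := UniqueFactorizationMonoid.exists_prime_factors D hD
  have hprod : (f.map (aeval P)).prod = 0 := by
    rw [← map_multiset_prod, ← zero_dvd_iff, ← hP]
    exact map_dvd _ hassoc.symm.dvd
  obtain ⟨p, hp, hpP⟩ := Multiset.mem_map.mp (Multiset.prod_eq_zero_iff.mp hprod)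
  exact ⟨p, hprime p hp, (Multiset.dvd_prod hp).trans hassoc.dvd, hpP⟩

lemma algebraicIndependent_of_pole {Ω K : Type*} [Field k] [CommRing Ω] [IsDomain Ω] [Algebra k Ω]
    [Field K] [Algebra (MvPolynomial σ k) K] [FaithfulSMul (MvPolynomial σ k) K] [Algebra k K]
    [IsScalarTower k (MvPolynomial σ k) K] {x y z D N : MvPolynomial σ k} {i : σ} {P Q : σ → Ω}
    (hz : z ≠ 0) (hPQ : P i = Q i) (hDP : aeval P D = 0) (hNP : aeval P N ≠ 0)
    (hDQ : aeval Q D ≠ 0) :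
    letI ι := algebraMap (MvPolynomial σ k) K
    AlgebraicIndependent k
      ![(ι x + ι N / ι D * ι (X i)) / ι z, (ι y + ι N / ι D) / ι z] := by
  have hD : D ≠ 0 := by
    rintro rfl
    exact hDQ (map_zero _)
  obtain ⟨p, hprime, hpD, hpP⟩ := exists_prime_dvd_of_aeval_eq_zero hD hDP
  have hpQ : aeval Q p ≠ 0 := fun h ↦ hDQ (zero_dvd_iff.mp (h ▸ map_dvd (aeval Q) hpD))
  have hpN : ¬ p ∣ N := fun h ↦ hNP (zero_dvd_iff.mp (hpP ▸ map_dvd (aeval P) h))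
  have : (Ideal.span {p}).IsPrime := (Ideal.span_singleton_prime hprime.ne_zero).mpr hprime
  let φ := Ideal.Quotient.mkₐ k (Ideal.span {p})
  have hφD : φ D = 0 := (Ideal.Quotient.eq_zero_iff_dvd _ _).mpr hpD
  have hφN : φ N ≠ 0 := (Ideal.Quotient.eq_zero_iff_dvd _ _).not.mpr hpN
  have hφX : Transcendental k (φ (X i)) := transcendental_mk_X hPQ hpP hpQ
  have hindep := algebraicIndependent_div_of_forall_isHomogeneous (K := K) φ
    (a := ![x * D + N * X i, y * D + N]) (mul_ne_zero hz hD) (by simp [hφD]) fun F d hF h ↦ by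
      refine eq_zero_of_isHomogeneous_of_transcendental hF hφN hφX ?_
      rw [← h]
      congr 2
      ext i
      fin_cases i <;> simp [hφD]
  have hιz : algebraMap _ K z ≠ 0 := by
    simpa using (FaithfulSMul.algebraMap_injective (MvPolynomial σ k) K).ne hz
  have hιD : algebraMap _ K D ≠ 0 := by
    simpa using (FaithfulSMul.algebraMap_injective (MvPolynomial σ k) K).ne hD
  convert hindep using 1
  ext j
  fin_cases j <;> simp [field]

end PolesAtInfinity

section ResidualPoint

/-- Numerator of the parameter `l` at the residual point: if `(x : y : z : w)` lies on
`γw² = x⁴ + y⁴ + z⁴`, then a parabola in `l` meeting the double cover of the line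
`(x + sl : y + l : z)` to order three over `l = 0` meets it once more at
`l = residualNum γ x y w s / residualDen γ x y w s`. -/
def residualNum {R : Type*} [CommRing R] (γ x y w s : R) : R :=
  γ * w ^ 2 * ((x ^ 3 * s + y ^ 3) ^ 3 - (x * s ^ 3 + y) * (γ * w ^ 2) ^ 2)

/-- Denominator of the parameter at the residual point, see `residualNum`. -/
def residualDen {R : Type*} [CommRing R] (γ x y w s : R) : R :=
  (γ * w ^ 2) ^ 3 * (s ^ 4 + 1) - (x ^ 3 * s + y ^ 3) ^ 4

lemma fermat_quartic_restrict_line {R : Type*} [CommRing R] [CharP R 3] (x y s l : R) :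
    (x + l * s) ^ 4 + (y + l) ^ 4 =
      x ^ 4 + y ^ 4 + (x ^ 3 * s + y ^ 3) * l + (x * s ^ 3 + y) * l ^ 3 + (s ^ 4 + 1) * l ^ 4 := by
  grind

variable {K : Type*} [Field K] [CharP K 3]

lemma exists_parabola_sq_eq {γ w f₁ f₃ f₄ l : K} (hγ : γ ≠ 0) (hw : w ≠ 0)
    (hl : l * ((γ * w ^ 2) ^ 3 * f₄ - f₁ ^ 4) = γ * w ^ 2 * (f₁ ^ 3 - f₃ * (γ * w ^ 2) ^ 2)) :
    ∃ α β, γ * (w + α * l + β * l ^ 2) ^ 2 = γ * w ^ 2 + f₁ * l + f₃ * l ^ 3 + f₄ * l ^ 4 := by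
  let α := -f₁ / (γ * w)
  let β := f₁ ^ 2 / (γ ^ 2 * w ^ 3)
  have hlinear : 2 * γ * w * α = f₁ := by
    simp only [α]
    field_simp
    grind
  have hquadratic : γ * (2 * w * β + α ^ 2) = 0 := by
    simp only [α, β]
    field_simp
    grind
  have hresidual : γ * (2 * α * β + β ^ 2 * l) = f₃ + f₄ * l := by
    simp only [α, β]
    field_simp
    grind
  refine ⟨α, β, ?_⟩
  calc γ * (w + α * l + β * l ^ 2) ^ 2
      = γ * w ^ 2 + 2 * γ * w * α * l + γ * (2 * w * β + α ^ 2) * l ^ 2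
          + γ * (2 * α * β + β ^ 2 * l) * l ^ 3 := by ring
    _ = γ * w ^ 2 + f₁ * l + f₃ * l ^ 3 + f₄ * l ^ 4 := by
      rw [hlinear, hquadratic, hresidual]
      ring

lemma exists_sq_eq_at_residual_point {γ x y z w s : K} (hγ : γ ≠ 0) (hz : z ≠ 0) (hw : w ≠ 0)
    (hD : residualDen γ x y w s ≠ 0) (hsurf : γ * w ^ 2 = x ^ 4 + y ^ 4 + z ^ 4) :
    letI l := residualNum γ x y w s / residualDen γ x y w s
    ∃ ω, γ * ω ^ 2 = ((x + l * s) / z) ^ 4 + ((y + l) / z) ^ 4 + 1 := by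
  set l := residualNum γ x y w s / residualDen γ x y w s with hl
  obtain ⟨α, β, h⟩ := exists_parabola_sq_eq (l := l) hγ hw ((eq_div_iff hD).mp hl)
  refine ⟨(w + α * l + β * l ^ 2) / z ^ 2, ?_⟩
  calc γ * ((w + α * l + β * l ^ 2) / z ^ 2) ^ 2
      = γ * (w + α * l + β * l ^ 2) ^ 2 / z ^ 4 := by ring
    _ = ((x + l * s) ^ 4 + (y + l) ^ 4 + z ^ 4) / z ^ 4 := by
      rw [h, fermat_quartic_restrict_line, hsurf]
      ring
    _ = ((x + l * s) / z) ^ 4 + ((y + l) / z) ^ 4 + 1 := by field_simp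

end ResidualPoint

section RationalCurve

variable {R : Type*} [CommRing R]

/-- First coordinate of the rational curve `t ↦ (x(t) : y(t) : t⁴ : w(t))` on `X₃`. -/
def curveX (γ t : R) : R := 1 - γ * t ^ 2 + (γ - 1) * t ^ 6

/-- Second coordinate of the rational curve on `X₃`, see `curveX`. -/
def curveY (γ t : R) : R := γ + (1 + γ) * t ^ 2 + (1 - γ) * t ^ 4 + t ^ 6

/-- Weight-two coordinate of the rational curve on `X₃`, see `curveX`. -/
def curveW (γ t : R) : R := t * (1 + γ * t ^ 2 - t ^ 8 - γ * t ^ 10)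

/-- `residualNum` along the rational curve, as a function of the slope `s` and the parameter `t`. -/
def curveResidualNum (γ s t : R) : R :=
  residualNum γ (curveX γ t) (curveY γ t) (curveW γ t) s

/-- `residualDen` along the rational curve, as a function of the slope `s` and the parameter `t`. -/
def curveResidualDen (γ s t : R) : R :=
  residualDen γ (curveX γ t) (curveY γ t) (curveW γ t) s

section Map

variable {S F : Type*} [CommRing S] [FunLike F R S] [RingHomClass F R S] (φ : F) (γ s t : R)

lemma map_curveX : φ (curveX γ t) = curveX (φ γ) (φ t) := by
  simp only [curveX, map_add, map_sub, map_mul, map_pow, map_one]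

lemma map_curveY : φ (curveY γ t) = curveY (φ γ) (φ t) := by
  simp only [curveY, map_add, map_sub, map_mul, map_pow, map_one]

lemma map_curveW : φ (curveW γ t) = curveW (φ γ) (φ t) := by
  simp only [curveW, map_add, map_sub, map_mul, map_pow, map_one]

lemma map_curveResidualNum :
    φ (curveResidualNum γ s t) = curveResidualNum (φ γ) (φ s) (φ t) := by
  simp only [curveResidualNum, residualNum, map_add, map_sub, map_mul, map_pow, map_curveX,
    map_curveY, map_curveW]

lemma map_curveResidualDen :
    φ (curveResidualDen γ s t) = curveResidualDen (φ γ) (φ s) (φ t) := by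
  simp only [curveResidualDen, residualDen, map_add, map_sub, map_mul, map_pow, map_one, map_curveX,
    map_curveY, map_curveW]

end Map

variable [CharP R 3]

lemma curve_mem_surface {γ : R} (hγ : γ ^ 2 = γ + 1) (t : R) :
    γ * curveW γ t ^ 2 = curveX γ t ^ 4 + curveY γ t ^ 4 + (t ^ 4) ^ 4 := by
  simp only [curveX, curveY, curveW]
  grind

lemma curveResidualDen_at_one (γ s : R) : curveResidualDen γ s 1 = -γ ^ 12 := by
  have hx : curveX γ 1 = 0 := by simp [curveX]
  have hy : curveY γ 1 = γ := by simp only [curveY]; grind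
  have hw : curveW γ 1 = 0 := by simp [curveW]
  simp only [curveResidualDen, residualDen, hx, hy, hw]
  ring

lemma exists_sq_eq_at_curve_residual_point {K : Type*} [Field K] [CharP K 3] {γ s t : K}
    (hγ : γ ^ 2 = γ + 1) (ht : t ≠ 0) (hw : curveW γ t ≠ 0) (hD : curveResidualDen γ s t ≠ 0) :
    letI l := curveResidualNum γ s t / curveResidualDen γ s t
    ∃ ω, γ * ω ^ 2 =
      ((curveX γ t + l * s) / t ^ 4) ^ 4 + ((curveY γ t + l) / t ^ 4) ^ 4 + 1 := by
  have hγ0 : γ ≠ 0 := by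
    rintro rfl
    simp at hγ
  exact exists_sq_eq_at_residual_point hγ0 (pow_ne_zero 4 ht) hw hD (curve_mem_surface hγ t)

section PoleOverF81

variable {z : R} (hz : (z ^ 2) ^ 2 = z ^ 2 + 1)
include hz

lemma curveX_at_pole : curveX (z ^ 2) (1 + z ^ 3) = -1 - z ^ 3 := by
  simp only [curveX]
  grind

lemma curveY_at_pole : curveY (z ^ 2) (1 + z ^ 3) = z - z ^ 2 - z ^ 3 := by
  simp only [curveY]
  grind

lemma sq_curveW_at_pole : z ^ 2 * curveW (z ^ 2) (1 + z ^ 3) ^ 2 = -1 - z + z ^ 3 := by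
  rw [curve_mem_surface hz, curveX_at_pole hz, curveY_at_pole hz]
  grind

lemma curveResidualDen_at_pole : curveResidualDen (z ^ 2) (z - z ^ 2) (1 + z ^ 3) = 0 := by
  simp only [curveResidualDen, residualDen, curveX_at_pole hz, curveY_at_pole hz,
    sq_curveW_at_pole hz]
  grind

lemma curveResidualNum_at_pole :
    curveResidualNum (z ^ 2) (z - z ^ 2) (1 + z ^ 3) = z ^ 3 - z ^ 2 := by
  simp only [curveResidualNum, residualNum, curveX_at_pole hz, curveY_at_pole hz,
    sq_curveW_at_pole hz]
  grind

end PoleOverF81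

end RationalCurve

section Unirationality

variable {k : Type*} [Field k] [CharP k 3] {γ : k}

lemma exists_curveResidual_pole (hγ : γ ^ 2 = γ + 1) :
    ∃ P Q : Fin 2 → AlgebraicClosure k, P 0 = Q 0 ∧
      aeval P (curveResidualDen (C γ) (X 0) (X 1)) = 0 ∧
      aeval P (curveResidualNum (C γ) (X 0) (X 1)) ≠ 0 ∧
      aeval Q (curveResidualDen (C γ) (X 0) (X 1)) ≠ 0 := by
  obtain ⟨z, hz⟩ := IsAlgClosed.exists_pow_nat_eq (algebraMap k (AlgebraicClosure k) γ) two_pos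
  have hzγ : (z ^ 2) ^ 2 = z ^ 2 + 1 := by
    rw [hz, ← map_pow, hγ, map_add, map_one]
  have hz0 : z ≠ 0 := by
    rintro rfl
    simp at hzγ
  have hz1 : z ≠ 1 := by
    rintro rfl
    simp at hzγ
  refine ⟨![z - z ^ 2, 1 + z ^ 3], ![z - z ^ 2, 1], rfl, ?_, ?_, ?_⟩
  · simp [map_curveResidualDen, ← hz, curveResidualDen_at_pole hzγ]
  · have : z ^ 3 - z ^ 2 = z ^ 2 * (z - 1) := by ring
    simp [map_curveResidualNum, ← hz, curveResidualNum_at_pole hzγ, this, hz0, sub_ne_zero.mpr hz1]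
  · simp [map_curveResidualDen, ← hz, curveResidualDen_at_one, hz0]

theorem X3_unirational_general (hγ : γ ^ 2 = γ + 1) :
    ∃ u v ω : FractionRing (MvPolynomial (Fin 2) k),
      AlgebraicIndependent k ![u, v] ∧
      algebraMap k (FractionRing (MvPolynomial (Fin 2) k)) γ * ω ^ 2 = u ^ 4 + v ^ 4 + 1 := by
  obtain ⟨P, Q, hPQ, hDP, hNP, hDQ⟩ := exists_curveResidual_pole hγ
  let ι := algebraMap (MvPolynomial (Fin 2) k) (FractionRing (MvPolynomial (Fin 2) k))
  have hι {a : MvPolynomial (Fin 2) k} : ι a ≠ 0 ↔ a ≠ 0 := by simp [ι]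
  have hD : ι (curveResidualDen (C γ) (X 0) (X 1)) ≠ 0 := hι.mpr fun h ↦ hDQ (by rw [h, map_zero])
  have hw : ι (curveW (C γ) (X 1)) ≠ 0 := hι.mpr fun h ↦
    hNP (by simp [curveResidualNum, residualNum, h])
  have hγι : ι (C γ) ^ 2 = ι (C γ) + 1 := by simp only [← map_pow, hγ, map_add, map_one]
  have hindep := algebraicIndependent_of_pole (K := FractionRing (MvPolynomial (Fin 2) k))
    (x := curveX (C γ) (X 1)) (y := curveY (C γ) (X 1)) (pow_ne_zero 4 (X_ne_zero 1))
    hPQ hDP hNP hDQ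
  rw [map_curveResidualDen] at hD
  rw [map_curveW] at hw
  obtain ⟨ω, hω⟩ := exists_sq_eq_at_curve_residual_point hγι (hι.mpr (X_ne_zero 1)) hw hD
  simp only [map_curveX, map_curveY, map_curveResidualNum, map_curveResidualDen, map_pow] at hindep
  exact ⟨_, _, ω, hindep, hω⟩

end Unirationality

/-- Unirationality of the del Pezzo surface `X₃ : γw² = x⁴ + y⁴ + z⁴` of degree 2
over `F₉`, where `γ ∈ F₉` satisfies `γ² = γ + 1` (case `i = 3` of Theorem 3.3):
there exist `u, v, ω` in the rational function field `F₉(s,t)` with `u, v`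
algebraically independent over `F₉` and `γ·ω² = u⁴ + v⁴ + 1`. -/
theorem X3_unirational (γ : GaloisField 3 2) (hγ : γ ^ 2 = γ + 1) :
    ∃ u v ω : FractionRing (MvPolynomial (Fin 2) (GaloisField 3 2)),
      AlgebraicIndependent (GaloisField 3 2) ![u, v] ∧
      algebraMap (GaloisField 3 2) (FractionRing (MvPolynomial (Fin 2) (GaloisField 3 2))) γ
        * ω ^ 2 = u ^ 4 + v ^ 4 + 1 :=
  X3_unirational_general hγ
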